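/- Let (X,V) : ℝ → ℝ³ × ℝ³ be a global C¹ solution of the repulsive Kepler ODE with X(t) ≠ 0 for all t, and write ⟨t⟩ = √(4 + t²). Suppose there exist times 0 ≤ t₁ < t₂ with |X(t₁)| ≤ ⟨t₁⟩ and |X(t₂)| ≥ 10⟨t₂⟩. Then |X(t)| ≥ ⟨t⟩ for all t ≥ t₂; that is, once a trajectory passes from the close region {|X(t)| ≤ ⟨t⟩} to the far region {|X(t)| ≥ 10⟨t⟩}, it remains in the far region {|X(t)| ≥ ⟨t⟩} for all later times. -/

import Mathlib

noncomputable section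

/-- Euclidean three-space. -/
abbrev R3 : Type := EuclideanSpace ℝ (Fin 3)

/-!
If `⟪X, X''⟫ ≥ 0`, that is, if the force is repulsive, then `‖X‖` is convex in time: `f = ‖X‖²` has
`f' = 2 ⟪X, X'⟫` and `f'' = 2 (‖X'‖² + ⟪X, X''⟫)`, so that `(f')² ≤ 2 f f''` by Cauchy–Schwarz, and
this inequality is the convexity of `√f`.

Since `‖X t₁‖ ≤ ⟨t₁⟩ ≤ ⟨t₂⟩` and `‖X t₂‖ ≥ 2 ⟨t₂⟩`, the radius increases between the two times by at
least `⟨t₂⟩ ≥ t₂ - t₁`. By convexity its later slopes are at least `1`, whereas `⟨t⟩` is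
`1`-Lipschitz.
-/

open Filter Topology
open scoped RealInnerProductSpace

lemma convexOn_sqrt_of_pos {D : Set ℝ} (hD : Convex ℝ D) {f f' f'' : ℝ → ℝ}
    (hf : ContinuousOn f D)
    (hf' : ∀ x ∈ interior D, HasDerivWithinAt f (f' x) (interior D) x)
    (hf'' : ∀ x ∈ interior D, HasDerivWithinAt f' (f'' x) (interior D) x)
    (hpos : ∀ x ∈ interior D, 0 < f x)
    (hsq : ∀ x ∈ interior D, f' x ^ 2 ≤ 2 * f x * f'' x) :
    ConvexOn ℝ D fun x ↦ √(f x) := by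
  have hsqrt' (x) (hx : x ∈ interior D) := (hf' x hx).sqrt (hpos x hx).ne'
  have hsqrt'' (x) (hx : x ∈ interior D) :=
    (hf'' x hx).div ((hsqrt' x hx).const_mul 2) (by have := hpos x hx; positivity)
  refine convexOn_of_hasDerivWithinAt2_nonneg hD hf.sqrt hsqrt' hsqrt'' fun x hx ↦ ?_
  have hfx := hpos x hx
  have hnum : f'' x * (2 * √(f x)) - f' x * (2 * (f' x / (2 * √(f x)))) =
      (2 * f x * f'' x - f' x ^ 2) / √(f x) := by
    field_simp
    rw [Real.sq_sqrt hfx.le]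
  rw [hnum]
  have := sub_nonneg.mpr (hsq x hx)
  positivity

lemma convexOn_sqrt_of_nonneg {D : Set ℝ} (hD : Convex ℝ D) {f f' f'' : ℝ → ℝ}
    (hf : ContinuousOn f D)
    (hf' : ∀ x ∈ interior D, HasDerivWithinAt f (f' x) (interior D) x)
    (hf'' : ∀ x ∈ interior D, HasDerivWithinAt f' (f'' x) (interior D) x)
    (hnonneg : ∀ x ∈ interior D, 0 ≤ f x) (hnonneg'' : ∀ x ∈ interior D, 0 ≤ f'' x)
    (hsq : ∀ x ∈ interior D, f' x ^ 2 ≤ 2 * f x * f'' x) :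
    ConvexOn ℝ D fun x ↦ √(f x) := by
  -- `√f` may fail to be differentiable at the zeros of `f`, so it is approximated by `√(f + ε)`.
  have happrox (ε : ℝ) (hε : 0 < ε) : ConvexOn ℝ D fun x ↦ √(f x + ε) := by
    refine convexOn_sqrt_of_pos hD (hf.add continuousOn_const)
      (fun x hx ↦ (hf' x hx).add_const ε) hf''
      (fun x hx ↦ add_pos_of_nonneg_of_pos (hnonneg x hx) hε) fun x hx ↦ ?_
    linarith [hsq x hx, mul_nonneg hε.le (hnonneg'' x hx)]
  have hlim : Tendsto (fun ε x ↦ √(f x + ε)) (𝓝[>] 0) (𝓝 fun x ↦ √(f x)) := by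
    have hcont : Continuous fun (ε : ℝ) x ↦ √(f x + ε) := by fun_prop
    simpa only [add_zero] using (hcont.tendsto 0).mono_left nhdsWithin_le_nhds
  exact isClosed_setOfPred_convexOn.mem_of_tendsto hlim (eventually_mem_nhdsWithin.mono happrox)

lemma add_mul_sub_le_of_convexOn {𝕜 : Type*} [Field 𝕜] [LinearOrder 𝕜] [IsStrictOrderedRing 𝕜]
    {s : Set 𝕜} {f : 𝕜 → 𝕜} (hf : ConvexOn 𝕜 s f) {m x y z : 𝕜} (hx : x ∈ s) (hz : z ∈ s)
    (hxy : x < y) (hyz : y ≤ z) (hm : f x + m * (y - x) ≤ f y) :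
    f y + m * (z - y) ≤ f z := by
  rcases hyz.eq_or_lt with rfl | hyz
  · simp
  have hslope : m ≤ (f z - f y) / (z - y) :=
    calc m ≤ (f y - f x) / (y - x) := by
          rw [le_div_iff₀ (sub_pos.mpr hxy)]
          exact le_sub_iff_add_le'.mpr hm
      _ ≤ (f z - f y) / (z - y) := hf.slope_mono_adjacent hx hz hxy hyz
  exact le_sub_iff_add_le'.mp ((le_div_iff₀ (sub_pos.mpr hyz)).mp hslope)

lemma lipschitzWith_sqrt_add_sq {a : ℝ} (ha : 0 ≤ a) :
    LipschitzWith 1 fun t ↦ √(a + t ^ 2) := by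
  refine LipschitzWith.of_le_add fun t s ↦ ?_
  rw [Real.dist_eq]
  have hs : |s| ≤ √(a + s ^ 2) := Real.abs_le_sqrt (le_add_of_nonneg_left ha)
  have hcross : s * (t - s) ≤ √(a + s ^ 2) * |t - s| :=
    calc s * (t - s) ≤ |s| * |t - s| := (le_abs_self _).trans_eq (abs_mul _ _)
      _ ≤ √(a + s ^ 2) * |t - s| := by gcongr
  refine Real.sqrt_le_iff.mpr ⟨by positivity, ?_⟩
  calc a + t ^ 2 = (a + s ^ 2) + 2 * (s * (t - s)) + (t - s) ^ 2 := by ring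
    _ ≤ (a + s ^ 2) + 2 * (√(a + s ^ 2) * |t - s|) + (t - s) ^ 2 := by gcongr
    _ = (√(a + s ^ 2) + |t - s|) ^ 2 := by
      rw [add_sq, Real.sq_sqrt (by positivity), sq_abs, mul_assoc]

section RepulsiveForce

variable {E : Type*} [NormedAddCommGroup E] [InnerProductSpace ℝ E] {D : Set ℝ} {X V A : ℝ → E}

lemma convexOn_norm_of_inner_nonneg (hD : Convex ℝ D)
    (hX : ∀ t ∈ D, HasDerivWithinAt X (V t) D t) (hV : ∀ t ∈ D, HasDerivWithinAt V (A t) D t)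
    (hA : ∀ t ∈ D, 0 ≤ ⟪X t, A t⟫) :
    ConvexOn ℝ D fun t ↦ ‖X t‖ := by
  have hX_int (t) (ht : t ∈ interior D) := (hX t (interior_subset ht)).mono interior_subset
  have hV_int (t) (ht : t ∈ interior D) := (hV t (interior_subset ht)).mono interior_subset
  have hA_int (t) (ht : t ∈ interior D) := hA t (interior_subset ht)
  have hcont : ContinuousOn X D := fun t ht ↦ (hX t ht).continuousWithinAt
  have hconvex : ConvexOn ℝ D fun t ↦ √(‖X t‖ ^ 2) := by
    refine convexOn_sqrt_of_nonneg hD (hcont.norm.pow 2) (fun t ht ↦ (hX_int t ht).norm_sq)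
      (fun t ht ↦ ((hX_int t ht).inner ℝ (hV_int t ht)).const_mul 2)
      (fun t _ ↦ sq_nonneg _) (fun t ht ↦ ?_) fun t ht ↦ ?_
    all_goals rw [real_inner_self_eq_norm_sq]
    · have := hA_int t ht
      positivity
    · have hcauchy : ⟪X t, V t⟫ ^ 2 ≤ ‖X t‖ ^ 2 * ‖V t‖ ^ 2 := by
        rw [← mul_pow]
        exact sq_le_sq.mpr ((abs_real_inner_le_norm _ _).trans (le_abs_self _))
      linarith [mul_nonneg (sq_nonneg ‖X t‖) (hA_int t ht)]
  simpa only [Real.sqrt_sq (norm_nonneg _)] using hconvex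

theorem kepler_close_to_far_transition_general (hD : Convex ℝ D)
    (hX : ∀ t ∈ D, HasDerivWithinAt X (V t) D t) (hV : ∀ t ∈ D, HasDerivWithinAt V (A t) D t)
    (hA : ∀ t ∈ D, 0 ≤ ⟪X t, A t⟫)
    {a t₁ t₂ t : ℝ} (ha : 0 ≤ a) (ht₁D : t₁ ∈ D) (htD : t ∈ D)
    (ht₁ : 0 ≤ t₁) (h12 : t₁ < t₂) (h2t : t₂ ≤ t)
    (hclose : ‖X t₁‖ ≤ √(a + t₁ ^ 2)) (hfar : 2 * √(a + t₂ ^ 2) ≤ ‖X t₂‖) :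
    √(a + t ^ 2) ≤ ‖X t‖ := by
  have hgrow : ‖X t₁‖ + 1 * (t₂ - t₁) ≤ ‖X t₂‖ := by
    have hle : √(a + t₁ ^ 2) ≤ √(a + t₂ ^ 2) := by gcongr
    have hge : t₂ ≤ √(a + t₂ ^ 2) := Real.le_sqrt_of_sq_le (le_add_of_nonneg_left ha)
    linarith
  calc √(a + t ^ 2) ≤ √(a + t₂ ^ 2) + (t - t₂) := by
        simpa only [NNReal.coe_one, one_mul, Real.dist_eq, abs_of_nonneg (sub_nonneg.mpr h2t)]
          using (lipschitzWith_sqrt_add_sq ha).le_add_mul t t₂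
    _ ≤ ‖X t₂‖ + 1 * (t - t₂) := by linarith [Real.sqrt_nonneg (a + t₂ ^ 2)]
    _ ≤ ‖X t‖ := add_mul_sub_le_of_convexOn (convexOn_norm_of_inner_nonneg hD hX hV hA)
      ht₁D htD h12 h2t hgrow

end RepulsiveForce

/-- Once a global solution of the repulsive Kepler ODE passes from the close region
`{|X(t)| ≤ ⟨t⟩}` to the far region `{|X(t)| ≥ 10⟨t⟩}` (with `⟨t⟩ = √(4 + t²)`),
it remains in the far region `{|X(t)| ≥ ⟨t⟩}` for all later times. -/
theorem kepler_close_to_far_transition (q : ℝ) (hq : 0 < q) (X V : ℝ → R3)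
    (hX0 : ∀ t, X t ≠ 0)
    (hX : ∀ t, HasDerivAt X (V t) t)
    (hV : ∀ t, HasDerivAt V ((q / 2 / ‖X t‖ ^ 3) • X t) t)
    (t₁ t₂ : ℝ) (ht₁ : 0 ≤ t₁) (h12 : t₁ < t₂)
    (hclose : ‖X t₁‖ ≤ Real.sqrt (4 + t₁ ^ 2))
    (hfar : 10 * Real.sqrt (4 + t₂ ^ 2) ≤ ‖X t₂‖) :
    ∀ t, t₂ ≤ t → Real.sqrt (4 + t ^ 2) ≤ ‖X t‖ := by
  intro t ht
  refine kepler_close_to_far_transition_general convex_univ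
    (fun s _ ↦ (hX s).hasDerivWithinAt) (fun s _ ↦ (hV s).hasDerivWithinAt) (fun s _ ↦ ?_)
    zero_le_four (Set.mem_univ t₁) (Set.mem_univ t) ht₁ h12 ht hclose ?_
  · rw [real_inner_smul_right, real_inner_self_eq_norm_sq]
    positivity
  · linarith [Real.sqrt_nonneg (4 + t₂ ^ 2)]
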